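/- Let $x_1,\dots,x_n$ be integers greater than $1$. For every real $\rho\geq 3$ and every $0<\epsilon<1$ there exist positive integers $r,k_1,\dots,k_n$ such that $r\geq\rho$ and, for all $i$, $r\leq x_i^{k_i}\leq (1+\epsilon)r$ and $k_i\leq \dfrac{2^{2n+1}\,\log^n(\max_j x_j)\,\log\rho}{\log(x_i)\,\log^n(1+\epsilon)}$. -/

import Mathlib

/-- Dirichlet's simultaneous approximation theorem (pigeonhole form). -/
lemma dirichlet_simul (n N : ℕ) (hN : 0 < N) (a : Fin n → ℝ) :
    ∃ q : ℕ, 0 < q ∧ q ≤ N ^ n ∧ ∃ p : Fin n → ℤ, ∀ i, |q * a i - p i| * N ≤ 1 := by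
  have hNR : (0 : ℝ) < N := by exact_mod_cast hN
  have hlt : ∀ t : ℝ, ⌊Int.fract t * N⌋₊ < N := by
    intro t
    rw [Nat.floor_lt (mul_nonneg (Int.fract_nonneg t) hNR.le)]
    nlinarith [Int.fract_lt_one t]
  let f : Fin (N ^ n + 1) → (Fin n → Fin N) :=
    fun q i => ⟨⌊Int.fract ((q : ℕ) * a i) * N⌋₊, hlt _⟩
  have main : ∀ u v : Fin (N ^ n + 1), u < v → f u = f v →
      ∃ q : ℕ, 0 < q ∧ q ≤ N ^ n ∧ ∃ p : Fin n → ℤ, ∀ i, |q * a i - p i| * N ≤ 1 := by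
    intro u v huv hf
    have h1 : (u : ℕ) < v := huv
    refine ⟨v - u, by omega, by omega, fun i => ⌊(v : ℕ) * a i⌋ - ⌊(u : ℕ) * a i⌋, fun i => ?_⟩
    have h2 : ⌊Int.fract ((u : ℕ) * a i) * N⌋₊ = ⌊Int.fract ((v : ℕ) * a i) * N⌋₊ :=
      congrArg Fin.val (congrFun hf i)
    have hu0 := Nat.floor_le (mul_nonneg (Int.fract_nonneg (((u : ℕ) : ℝ) * a i)) hNR.le)
    have hv0 := Nat.floor_le (mul_nonneg (Int.fract_nonneg (((v : ℕ) : ℝ) * a i)) hNR.le)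
    have hu1 := Nat.lt_floor_add_one (Int.fract (((u : ℕ) : ℝ) * a i) * N)
    have hv1 := Nat.lt_floor_add_one (Int.fract (((v : ℕ) : ℝ) * a i) * N)
    rw [h2] at hu0 hu1
    rw [← abs_of_pos hNR, ← abs_mul, Nat.cast_sub h1.le]
    have e1 := Int.self_sub_floor (((u : ℕ) : ℝ) * a i)
    have e2 := Int.self_sub_floor (((v : ℕ) : ℝ) * a i)
    have e3 : ((((v : ℕ) : ℝ) - ((u : ℕ) : ℝ)) * a i
        - ((⌊((v : ℕ) : ℝ) * a i⌋ - ⌊((u : ℕ) : ℝ) * a i⌋ : ℤ) : ℝ)) * N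
        = Int.fract (((v : ℕ) : ℝ) * a i) * N - Int.fract (((u : ℕ) : ℝ) * a i) * N := by
      rw [← e1, ← e2]; push_cast; ring
    rw [e3, abs_le]
    constructor <;> linarith
  obtain ⟨u, v, huv, hf⟩ := Fintype.exists_ne_map_eq_of_card_lt f (by simp)
  rcases lt_or_gt_of_ne huv with h | h
  · exact main u v h hf
  · exact main v u h hf.symm

/-- **A consequence of Dirichlet's simultaneous approximation theorem.**
Let `x 1, …, x n` be integers greater than 1.  For every real `ρ ≥ 3` and every `0 < ε < 1`
there exist positive integers `r, k 1, …, k n` such that `r ≥ ρ` and, for all `i`,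
`r ≤ x i ^ k i ≤ (1+ε) r` and
`k i ≤ 2^(2n+1) log^n (max_j x j) log ρ / (log (x i) log^n (1+ε))`. -/
theorem dirichlet_simultaneous_approx_powers
    (n : ℕ) (x : Fin n → ℕ) (hx : ∀ i, 1 < x i)
    (ρ : ℝ) (hρ : 3 ≤ ρ) (ε : ℝ) (hε0 : 0 < ε) (hε1 : ε < 1) :
    ∃ (r : ℕ) (k : Fin n → ℕ), 0 < r ∧ (∀ i, 0 < k i) ∧ ρ ≤ r ∧
      ∀ i, (r : ℝ) ≤ (x i : ℝ) ^ (k i) ∧ (x i : ℝ) ^ (k i) ≤ (1 + ε) * r ∧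
        (k i : ℝ) ≤ 2 ^ (2 * n + 1) * (Real.log ((Finset.univ.sup x : ℕ) : ℝ)) ^ n * Real.log ρ /
          (Real.log (x i) * (Real.log (1 + ε)) ^ n) := by
  rcases Nat.eq_zero_or_pos n with rfl | hn
  · refine ⟨⌈ρ⌉₊, fun _ => 1, Nat.ceil_pos.mpr (by linarith), fun i => i.elim0,
      Nat.le_ceil ρ, fun i => i.elim0⟩
  set M := Real.log ((Finset.univ.sup x : ℕ) : ℝ) with hM
  set δ := Real.log (1 + ε) with hδ
  have hδ0 : 0 < δ := Real.log_pos (by linarith)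
  have hδ2 : δ ≤ Real.log 2 := Real.log_le_log (by linarith) (by linarith)
  have hxR : ∀ i, (1 : ℝ) < x i := fun i => by exact_mod_cast hx i
  have hL0 : ∀ i, 0 < Real.log (x i) := fun i => Real.log_pos (hxR i)
  have hLM : ∀ i, Real.log (x i) ≤ M := fun i =>
    Real.log_le_log (by linarith [hxR i])
      (by exact_mod_cast Finset.le_sup (f := x) (Finset.mem_univ i))
  have hL2 : ∀ i, Real.log 2 ≤ Real.log (x i) := fun i =>
    Real.log_le_log (by norm_num) (by exact_mod_cast hx i)
  have hMδ : δ ≤ M := hδ2.trans ((hL2 ⟨0, hn⟩).trans (hLM ⟨0, hn⟩))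
  have hlogρ : Real.log 2 ≤ Real.log ρ := Real.log_le_log (by norm_num) (by linarith)
  have hM0 : 0 < M := by linarith
  have hN : 0 < ⌈2 * M / δ⌉₊ := Nat.ceil_pos.mpr (by positivity)
  have hN1 : 2 * M / δ ≤ ⌈2 * M / δ⌉₊ := Nat.le_ceil _
  have hN2 : (⌈2 * M / δ⌉₊ : ℝ) < 2 * M / δ + 1 := Nat.ceil_lt_add_one (by positivity)
  set N := ⌈2 * M / δ⌉₊
  have hNR : (0 : ℝ) < N := by exact_mod_cast hN
  have h1 : 1 ≤ M / δ := (one_le_div hδ0).mpr hMδ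
  have hN3 : (N : ℝ) ≤ 4 * (M / δ) := by
    have : 2 * M / δ = 2 * (M / δ) := by ring
    linarith
  have hN4 : 2 * M ≤ N * δ := (div_le_iff₀ hδ0).mp hN1
  set T := Real.log ρ + δ / 2 with hT
  have hT0 : 0 < T := by linarith
  obtain ⟨q, hq0, hqN, p, hp⟩ := dirichlet_simul n N hN (fun i => T / Real.log (x i))
  have hq1 : (1 : ℝ) ≤ q := by exact_mod_cast hq0
  have hqN' : (q : ℝ) ≤ (N : ℝ) ^ n := by exact_mod_cast hqN
  have key : ∀ i, |q * T - p i * Real.log (x i)| ≤ δ / 2 := by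
    intro i
    have e : (q : ℝ) * T - p i * Real.log (x i)
        = (q * (T / Real.log (x i)) - p i) * Real.log (x i) := by
      have := (hL0 i).ne'
      field_simp
    rw [e, abs_mul, abs_of_pos (hL0 i)]
    have h := hp i
    have h3 : |(q : ℝ) * (T / Real.log (x i)) - p i| * Real.log (x i) * N ≤ δ / 2 * N := by
      have := mul_le_mul_of_nonneg_right h (hL0 i).le
      have := hLM i
      nlinarith
    exact le_of_mul_le_mul_right h3 hNR
  have lo : ∀ i, Real.log ρ ≤ p i * Real.log (x i) := by
    intro i
    have := (abs_le.mp (key i)).2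
    nlinarith
  have hp0 : ∀ i, 0 < p i := by
    intro i
    have h : 0 < (p i : ℝ) * Real.log (x i) := by linarith [lo i]
    exact_mod_cast (pos_iff_pos_of_mul_pos h).mpr (hL0 i)
  have hk : ∀ i, (((p i).toNat : ℕ) : ℝ) = p i := by
    intro i
    exact_mod_cast Int.toNat_of_nonneg (hp0 i).le
  have hlog : ∀ i, Real.log ((x i : ℝ) ^ (p i).toNat) = p i * Real.log (x i) := by
    intro i
    rw [Real.log_pow, hk]
  have hpos : ∀ i, (0 : ℝ) < (x i : ℝ) ^ (p i).toNat := fun i =>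
    pow_pos (by linarith [hxR i]) _
  obtain ⟨j, -, hj⟩ := Finset.exists_min_image Finset.univ (fun i => x i ^ (p i).toNat)
    ⟨⟨0, hn⟩, Finset.mem_univ _⟩
  refine ⟨x j ^ (p j).toNat, fun i => (p i).toNat, ?_, ?_, ?_, ?_⟩
  · exact pow_pos (by linarith [hx j]) _
  · intro i
    have := hp0 i
    show 0 < (p i).toNat
    omega
  · push_cast
    rw [← Real.log_le_log_iff (by linarith) (hpos j), hlog]
    exact lo j
  · intro i
    refine ⟨by exact_mod_cast hj i (Finset.mem_univ i), ?_, ?_⟩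
    · push_cast
      rw [← Real.log_le_log_iff (hpos i) (mul_pos (by linarith) (hpos j)),
        Real.log_mul (by linarith) (hpos j).ne', hlog, hlog]
      have := (abs_le.mp (key i)).1
      have := (abs_le.mp (key j)).2
      linarith
    · show (((p i).toNat : ℕ) : ℝ) ≤ _
      rw [hk, le_div_iff₀ (mul_pos (hL0 i) (pow_pos hδ0 n)), ← mul_assoc]
      have a1 : (p i : ℝ) * Real.log (x i) ≤ q * T + δ / 2 := by
        have := (abs_le.mp (key i)).1
        linarith
      have a2 : (p i : ℝ) * Real.log (x i) ≤ q * (2 * Real.log ρ) := by nlinarith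
      have hl : 0 ≤ 2 * Real.log ρ := by linarith
      have a3 : (q : ℝ) ≤ (4 * (M / δ)) ^ n :=
        hqN'.trans (pow_le_pow_left₀ hNR.le hN3 n)
      have a4 := a2.trans (mul_le_mul_of_nonneg_right a3 hl)
      refine (mul_le_mul_of_nonneg_right a4 (pow_pos hδ0 n).le).trans (le_of_eq ?_)
      have hδn := (pow_pos hδ0 n).ne'
      rw [mul_pow, div_pow, pow_succ, pow_mul]
      field_simp
      norm_num [mul_comm]
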